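/- Let k be an algebraically closed field of characteristic 0. The invariants J_2, J_3, J_4, J_5, J_6, J_7, viewed as polynomials in the coefficients a_0,...,a_8 of a generic binary octavic, are algebraically independent over k: if P ∈ k[X_1,...,X_6] satisfies P(J_2, J_3, J_4, J_5, J_6, J_7) = 0 in k[a_0,...,a_8], then P = 0. -/

import Mathlib

noncomputable section

open MvPolynomial


variable (k : Type*) [Field k]

/-- the r-th transvectant of binary forms over a k-algebra R, for forms of degrees n, m -/
def transvectantA (R : Type*) [CommRing R] [Algebra k R] (n m r : ℕ)
    (f g : MvPolynomial (Fin 2) R) : MvPolynomial (Fin 2) R :=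
  C (algebraMap k R ((((m - r).factorial * (n - r).factorial : ℕ) : k) /
      ((n.factorial * m.factorial : ℕ) : k))) *
    ∑ j ∈ Finset.range (r + 1),
      C ((-1 : R) ^ j * (r.choose j : R)) *
        ((fun p => pderiv (0 : Fin 2) p)^[r - j] ((fun p => pderiv (1 : Fin 2) p)^[j] f)) *
        ((fun p => pderiv (0 : Fin 2) p)^[j] ((fun p => pderiv (1 : Fin 2) p)^[r - j] g))

/-- the generic binary octavic, with coefficients the variables a_0, ..., a_8 -/
def genOct : MvPolynomial (Fin 2) (MvPolynomial (Fin 9) k) :=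
  ∑ i : Fin 9, C (X i) * X 0 ^ (i : ℕ) * X 1 ^ (8 - (i : ℕ))

def covgP := transvectantA k (MvPolynomial (Fin 9) k) 8 8 4 (genOct k) (genOct k)
def covkP := transvectantA k (MvPolynomial (Fin 9) k) 8 8 6 (genOct k) (genOct k)
def covhP := transvectantA k (MvPolynomial (Fin 9) k) 4 4 2 (covkP k) (covkP k)
def covmP := transvectantA k (MvPolynomial (Fin 9) k) 8 4 4 (genOct k) (covkP k)

/-- J_2 as a polynomial in the coefficients a_0, ..., a_8 -/
def JP2 : MvPolynomial (Fin 9) k :=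
  (2 ^ 2 * 5 * 7 : MvPolynomial (Fin 9) k) *
    constantCoeff (transvectantA k (MvPolynomial (Fin 9) k) 8 8 8 (genOct k) (genOct k))
def JP3 : MvPolynomial (Fin 9) k :=
  C ((2 ^ 4 * 5 ^ 2 * 7 ^ 3 : k) / 3) *
    constantCoeff (transvectantA k (MvPolynomial (Fin 9) k) 8 8 8 (genOct k) (covgP k))
def JP4 : MvPolynomial (Fin 9) k :=
  (2 ^ 9 * 3 * 7 ^ 4 : MvPolynomial (Fin 9) k) *
    constantCoeff (transvectantA k (MvPolynomial (Fin 9) k) 4 4 4 (covkP k) (covkP k))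
def JP5 : MvPolynomial (Fin 9) k :=
  (2 ^ 9 * 5 * 7 ^ 5 : MvPolynomial (Fin 9) k) *
    constantCoeff (transvectantA k (MvPolynomial (Fin 9) k) 4 4 4 (covmP k) (covkP k))
def JP6 : MvPolynomial (Fin 9) k :=
  (2 ^ 14 * 3 ^ 2 * 7 ^ 6 : MvPolynomial (Fin 9) k) *
    constantCoeff (transvectantA k (MvPolynomial (Fin 9) k) 4 4 4 (covkP k) (covhP k))
def JP7 : MvPolynomial (Fin 9) k :=
  (2 ^ 14 * 3 * 5 * 7 ^ 7 : MvPolynomial (Fin 9) k) *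
    constantCoeff (transvectantA k (MvPolynomial (Fin 9) k) 4 4 4 (covmP k) (covhP k))

section helpers

open Finset

/-- Jacobian criterion -/
theorem jac_crit {k : Type*} [Field k] [CharZero k] (J : Fin 6 → MvPolynomial (Fin 9) k)
    (D : Fin 6 → Derivation k (MvPolynomial (Fin 9) k) (MvPolynomial (Fin 9) k))
    (hdet : (Matrix.of fun i j => D j (J i)).det ≠ 0) :
    ∀ (N : ℕ) (P : MvPolynomial (Fin 6) k), P.totalDegree ≤ N → aeval J P = 0 → P = 0 := by
  have chain : ∀ (j : Fin 6) (P : MvPolynomial (Fin 6) k),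
      D j (aeval J P) = ∑ i, aeval J (pderiv i P) * D j (J i) := by
    intro j P
    induction P using MvPolynomial.induction_on with
    | C a => simp [aeval_C]
    | add p q hp hq => simp only [map_add, hp, hq, add_mul, Finset.sum_add_distrib]
    | mul_X p n hp =>
      simp only [map_mul, aeval_X, Derivation.leibniz, hp, smul_eq_mul, map_add, add_mul,
        Finset.sum_add_distrib, pderiv_X]
      congr 1
      · rw [Finset.sum_eq_single n]
        · simp
        · intro b _ hb
          simp [Pi.single_apply, hb]
        · simp
      · rw [Finset.mul_sum]
        exact Finset.sum_congr rfl fun i _ => by ring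
  have const : ∀ P : MvPolynomial (Fin 6) k, (∀ m, m ≠ 0 → coeff m P = 0) →
      aeval J P = 0 → P = 0 := by
    intro P hm hP
    have : P = C (coeff 0 P) := by
      ext m
      rw [coeff_C]
      split_ifs with h
      · rw [h]
      · exact hm m (Ne.symm h)
    rw [this] at hP ⊢
    simpa using hP
  intro N
  induction N with
  | zero =>
    intro P hd hP
    refine const P (fun m hm => ?_) hP
    by_contra hc
    have h1 := le_totalDegree (mem_support_iff.mpr hc)
    apply hm
    have h2 : m.degree = 0 := by
      have : m.degree ≤ P.totalDegree := h1
      omega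
    exact (Finsupp.degree_eq_zero_iff m).mp h2
  | succ N ih =>
    intro P hd hP
    have hv : ∀ i, aeval J (pderiv i P) = 0 := by
      have : (fun i => aeval J (pderiv i P)) = 0 := by
        apply Matrix.eq_zero_of_vecMul_eq_zero hdet
        ext1 j
        have := chain j P
        rw [hP, map_zero] at this
        simp only [Matrix.vecMul, dotProduct, Matrix.of_apply, Pi.zero_apply]
        exact this.symm
      exact fun i => congrFun this i
    have hz : ∀ i, pderiv i P = 0 := by
      intro i
      refine ih _ ?_ (hv i)
      rw [MvPolynomial.totalDegree]
      apply Finset.sup_le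
      intro m hm
      rw [mem_support_iff, coeff_pderiv] at hm
      have h1 := le_totalDegree (mem_support_iff.mpr (left_ne_zero_of_mul hm))
      have h2 : (m + Finsupp.single i 1).degree ≤ P.totalDegree := h1
      have h3 : (m + Finsupp.single i 1).degree = m.degree + 1 := by simp
      have h4 : m.degree ≤ N := by omega
      exact h4
    refine const P (fun m hm => ?_) hP
    obtain ⟨i, hi⟩ := Finsupp.ne_iff.mp hm
    have h := coeff_pderiv (i := i) P (m - Finsupp.single i 1)
    have h1 : m - Finsupp.single i 1 + Finsupp.single i 1 = m := by
      apply tsub_add_cancel_of_le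
      rw [Finsupp.single_le_iff]
      simp at hi
      omega
    rw [hz, h1, coeff_zero] at h
    rcases mul_eq_zero.mp h.symm with h | h
    · exact h
    · exact absurd h (Nat.cast_add_one_ne_zero _)

/-- binary form with given coefficients -/
def bform {R : Type*} [CommRing R] (n : ℕ) (c : ℕ → R) : MvPolynomial (Fin 2) R :=
  ∑ i ∈ range (n + 1), C (c i) * X 0 ^ i * X 1 ^ (n - i)

theorem bform_congr {R : Type*} [CommRing R] {n : ℕ} {c d : ℕ → R} (h : ∀ i ≤ n, c i = d i) :
    bform n c = bform n d := by
  unfold bform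
  refine Finset.sum_congr rfl fun i hi => ?_
  rw [h i (by simp at hi; omega)]

theorem D0_bform {R : Type*} [CommRing R] (n : ℕ) (c : ℕ → R) :
    pderiv (0 : Fin 2) (bform (n + 1) c) = bform n (fun i => (((i + 1 : ℕ) : ℕ) : R) * c (i + 1)) := by
  unfold bform
  rw [map_sum, Finset.sum_range_succ']
  have h0 : pderiv (0 : Fin 2) (C (c 0) * X 0 ^ 0 * X 1 ^ (n + 1 - 0) : MvPolynomial (Fin 2) R) = 0 := by
    simp [pderiv_mul, pderiv_pow, pderiv_X]
  rw [h0, add_zero]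
  refine Finset.sum_congr rfl fun i hi => ?_
  simp [pderiv_mul, pderiv_pow, pderiv_X]
  ring

theorem D1_bform {R : Type*} [CommRing R] (n : ℕ) (c : ℕ → R) :
    pderiv (1 : Fin 2) (bform (n + 1) c) = bform n (fun i => ((n - i + 1 : ℕ) : R) * c i) := by
  unfold bform
  rw [map_sum, Finset.sum_range_succ]
  have h0 : pderiv (1 : Fin 2) (C (c (n+1)) * X 0 ^ (n+1) * X 1 ^ (n + 1 - (n+1)) : MvPolynomial (Fin 2) R) = 0 := by
    simp [pderiv_mul, pderiv_pow, pderiv_X]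
  rw [h0, add_zero]
  refine Finset.sum_congr rfl fun i hi => ?_
  have : n + 1 - i = n - i + 1 := by simp at hi; omega
  rw [this]
  simp [pderiv_mul, pderiv_pow, pderiv_X]
  ring

theorem D0_iter {R : Type*} [CommRing R] (p : ℕ) : ∀ (n : ℕ) (c : ℕ → R),
    (fun q => pderiv (0 : Fin 2) q)^[p] (bform (n + p) c) =
      bform n (fun i => ((i + p).descFactorial p : R) * c (i + p)) := by
  induction p with
  | zero => intro n c; simp
  | succ p ih =>
    intro n c
    rw [Function.iterate_succ_apply, ← add_assoc, D0_bform, ih]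
    apply bform_congr
    intro i _
    rw [← add_assoc, Nat.succ_descFactorial_succ]
    push_cast
    ring

theorem D1_iter {R : Type*} [CommRing R] (p : ℕ) : ∀ (n : ℕ) (c : ℕ → R),
    (fun q => pderiv (1 : Fin 2) q)^[p] (bform (n + p) c) =
      bform n (fun i => ((n - i + p).descFactorial p : R) * c i) := by
  induction p with
  | zero => intro n c; simp
  | succ p ih =>
    intro n c
    rw [Function.iterate_succ_apply, ← add_assoc, D1_bform, ih]
    apply bform_congr
    intro i hi
    rw [← add_assoc, Nat.succ_descFactorial_succ, show n + p - i + 1 = n - i + p + 1 by omega]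
    push_cast
    ring

theorem bform_mul {R : Type*} [CommRing R] (p q : ℕ) (u v : ℕ → R) :
    bform p u * bform q v = bform (p + q) (fun l => ∑ x ∈ range (p + 1), ∑ y ∈ range (q + 1),
      if x + y = l then u x * v y else 0) := by
  unfold bform
  simp only [map_sum, Finset.sum_mul]
  rw [Finset.sum_comm]
  refine Finset.sum_congr rfl fun x hx => ?_
  rw [Finset.mul_sum, Finset.sum_comm]
  refine Finset.sum_congr rfl fun y hy => ?_
  rw [Finset.sum_eq_single (x + y)]
  · simp at hx hy
    have : p + q - (x + y) = (p - x) + (q - y) := by omega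
    rw [this]
    simp only [if_true, map_mul, pow_add]
    ring
  · intro b _ hb
    rw [if_neg (Ne.symm hb)]
    simp
  · intro h
    simp at h hx hy
    omega

/-- weights -/
def wt (n m r x y j : ℕ) : ℤ :=
  (-1) ^ j * ((r.choose j * ((x + (r - j)).descFactorial (r - j) * (n - r - x + j).descFactorial j *
    ((y + j).descFactorial j * (m - r - y + (r - j)).descFactorial (r - j))) : ℕ) : ℤ)

/-- coefficients of the unnormalised transvectant -/
def tv {R : Type*} [CommRing R] (n m r : ℕ) (c d : ℕ → R) (l : ℕ) : R :=
  ∑ x ∈ range (n - r + 1), ∑ y ∈ range (m - r + 1), if x + y = l then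
    ∑ j ∈ range (r + 1), wt n m r x y j • (c (x + (r - j)) * d (y + j)) else 0

theorem bform_sum {R ι : Type*} [CommRing R] (s : Finset ι) (n : ℕ) (c : ι → ℕ → R) :
    ∑ j ∈ s, bform n (c j) = bform n (fun i => ∑ j ∈ s, c j i) := by
  unfold bform
  rw [Finset.sum_comm]
  simp only [map_sum, Finset.sum_mul]

theorem C_mul_bform {R : Type*} [CommRing R] (s : R) (n : ℕ) (c : ℕ → R) :
    C s * bform n c = bform n (fun i => s * c i) := by
  unfold bform
  rw [Finset.mul_sum]
  simp only [map_mul, mul_assoc]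

theorem transv (k : Type*) [Field k] {R : Type*} [CommRing R] [Algebra k R] (n m r : ℕ)
    (hn : r ≤ n) (hm : r ≤ m) (c d : ℕ → R) :
    transvectantA k R n m r (bform n c) (bform m d) =
      C (algebraMap k R ((((m - r).factorial * (n - r).factorial : ℕ) : k) /
      ((n.factorial * m.factorial : ℕ) : k))) * bform (n - r + (m - r)) (tv n m r c d) := by
  unfold transvectantA
  congr 1
  have key : ∀ j ∈ range (r + 1), C ((-1 : R) ^ j * (r.choose j : R)) *
        ((fun p => pderiv (0 : Fin 2) p)^[r - j] ((fun p => pderiv (1 : Fin 2) p)^[j] (bform n c))) *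
        ((fun p => pderiv (0 : Fin 2) p)^[j] ((fun p => pderiv (1 : Fin 2) p)^[r - j] (bform m d)))
      = bform (n - r + (m - r)) (fun l => ∑ x ∈ range (n - r + 1), ∑ y ∈ range (m - r + 1),
        if x + y = l then wt n m r x y j • (c (x + (r - j)) * d (y + j)) else 0) := by
    intro j hj
    have hj' : j ≤ r := by simp at hj; omega
    obtain ⟨n', rfl⟩ : ∃ n', n = n' + (r - j) + j := ⟨n - r, by omega⟩
    obtain ⟨m', rfl⟩ : ∃ m', m = m' + j + (r - j) := ⟨m - r, by omega⟩
    have e1 : n' + (r - j) + j - r = n' := by omega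
    have e2 : m' + j + (r - j) - r = m' := by omega
    rw [D1_iter, D0_iter, D1_iter, D0_iter, mul_assoc, bform_mul, C_mul_bform, e1, e2]
    apply bform_congr
    intro l _
    rw [Finset.mul_sum]
    refine Finset.sum_congr rfl fun x hx => ?_
    rw [Finset.mul_sum]
    refine Finset.sum_congr rfl fun y hy => ?_
    simp at hx hy
    split_ifs with h
    · unfold wt
      rw [e1, e2, show n' + (r - j) - (x + (r - j)) = n' - x by omega,
        show m' + j - (y + j) = m' - y by omega]
      rw [zsmul_eq_mul]
      push_cast
      ring
    · simp
  rw [Finset.sum_congr rfl key, bform_sum]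
  apply bform_congr
  intro l _
  unfold tv
  rw [Finset.sum_comm]
  refine Finset.sum_congr rfl fun x hx => ?_
  rw [Finset.sum_comm]
  refine Finset.sum_congr rfl fun y hy => ?_
  split_ifs <;> simp

theorem tv_map {R S : Type*} [CommRing R] [CommRing S] (φ : R →+* S) (n m r : ℕ) (c d : ℕ → R)
    (l : ℕ) : φ (tv n m r c d l) = tv n m r (fun i => φ (c i)) (fun i => φ (d i)) l := by
  unfold tv
  simp only [map_sum, apply_ite φ, map_zsmul, map_mul, map_zero]

theorem tv_scale {R : Type*} [CommRing R] (n m r : ℕ) (s t : R) (c d : ℕ → R)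
    (l : ℕ) : tv n m r (fun i => s * c i) (fun i => t * d i) l = s * t * tv n m r c d l := by
  unfold tv
  rw [Finset.mul_sum]
  refine Finset.sum_congr rfl fun x hx => ?_
  rw [Finset.mul_sum]
  refine Finset.sum_congr rfl fun y hy => ?_
  split_ifs
  · rw [Finset.mul_sum]
    refine Finset.sum_congr rfl fun j hj => ?_
    rw [zsmul_eq_mul, zsmul_eq_mul]
    ring
  · simp

/-- derivative of `tv` -/
def dtv {R : Type*} [CommRing R] (n m r : ℕ) (c c' d d' : ℕ → R) (l : ℕ) : R :=
  tv n m r c' d l + tv n m r c d' l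

theorem tv_deriv {k R : Type*} [Field k] [CommRing R] [Algebra k R] (D : Derivation k R R)
    (n m r : ℕ) (c d : ℕ → R) (l : ℕ) :
    D (tv n m r c d l) = dtv n m r c (fun i => D (c i)) d (fun i => D (d i)) l := by
  unfold dtv tv
  rw [map_sum, ← Finset.sum_add_distrib]
  refine Finset.sum_congr rfl fun x hx => ?_
  rw [map_sum, ← Finset.sum_add_distrib]
  refine Finset.sum_congr rfl fun y hy => ?_
  split_ifs
  · rw [map_sum, ← Finset.sum_add_distrib]
    refine Finset.sum_congr rfl fun j hj => ?_
    rw [map_zsmul, Derivation.leibniz, ← smul_add]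
    simp only [smul_eq_mul]
    congr 1
    ring
  · simp

theorem dtv_map {R S : Type*} [CommRing R] [CommRing S] (φ : R →+* S) (n m r : ℕ)
    (c c' d d' : ℕ → R) (l : ℕ) : φ (dtv n m r c c' d d' l) =
      dtv n m r (fun i => φ (c i)) (fun i => φ (c' i)) (fun i => φ (d i)) (fun i => φ (d' i)) l := by
  unfold dtv
  rw [map_add, tv_map, tv_map]

section inv
variable {R : Type*} [CommRing R] (c c' : ℕ → R)

/-- unnormalised covariants -/
def Kc : ℕ → R := tv 8 8 6 c c
def Gc : ℕ → R := tv 8 8 4 c c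
def Hc : ℕ → R := tv 4 4 2 (Kc c) (Kc c)
def Mc : ℕ → R := tv 8 4 4 c (Kc c)
def Ic : Fin 6 → R := ![tv 8 8 8 c c 0, tv 8 8 8 c (Gc c) 0, tv 4 4 4 (Kc c) (Kc c) 0,
  tv 4 4 4 (Mc c) (Kc c) 0, tv 4 4 4 (Kc c) (Hc c) 0, tv 4 4 4 (Mc c) (Hc c) 0]
def dKc : ℕ → R := dtv 8 8 6 c c' c c'
def dGc : ℕ → R := dtv 8 8 4 c c' c c'
def dHc : ℕ → R := dtv 4 4 2 (Kc c) (dKc c c') (Kc c) (dKc c c')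
def dMc : ℕ → R := dtv 8 4 4 c c' (Kc c) (dKc c c')
def dIc : Fin 6 → R := ![dtv 8 8 8 c c' c c' 0, dtv 8 8 8 c c' (Gc c) (dGc c c') 0,
  dtv 4 4 4 (Kc c) (dKc c c') (Kc c) (dKc c c') 0,
  dtv 4 4 4 (Mc c) (dMc c c') (Kc c) (dKc c c') 0,
  dtv 4 4 4 (Kc c) (dKc c c') (Hc c) (dHc c c') 0,
  dtv 4 4 4 (Mc c) (dMc c c') (Hc c) (dHc c c') 0]

end inv

theorem dIc_map {R S : Type*} [CommRing R] [CommRing S] (φ : R →+* S) (c c' : ℕ → R) (i : Fin 6) :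
    φ (dIc c c' i) = dIc (fun i => φ (c i)) (fun i => φ (c' i)) i := by
  fin_cases i <;> simp [dIc, dtv_map, tv_map, Kc, Gc, Hc, Mc, dKc, dGc, dHc, dMc] <;> rfl

theorem Ic_deriv {k R : Type*} [Field k] [CommRing R] [Algebra k R] (D : Derivation k R R)
    (c : ℕ → R) (i : Fin 6) : D (Ic c i) = dIc c (fun i => D (c i)) i := by
  fin_cases i <;> simp [dIc, Ic, tv_deriv, Kc, Gc, Hc, Mc, dKc, dGc, dHc, dMc] <;> rfl

/-- the base point -/
def pt (i : ℕ) : ℤ := if i = 3 ∨ i = 6 then 1 else 0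
def dirs : Fin 6 → Fin 9 := ![0, 1, 2, 3, 4, 8]
def MZ : Matrix (Fin 6) (Fin 6) ℤ :=
  Matrix.of fun i j => dIc pt (fun l => if l = (dirs j : ℕ) then 1 else 0) i
def NZ : Matrix (Fin 6) (Fin 6) ℤ :=
  !![0, 17, 0, 0, 16, 0; 0, 0, 38, 0, 0, 83; 85, 0, 0, 0, 0, 0; 0, 88, 0, 0, 90, 0;
    0, 0, 27, 0, 0, 67; 39, 0, 0, 13, 0, 0]

theorem MN_check : ∀ i j, (∑ l, MZ i l * NZ l j) % 101 = if i = j then 1 else 0 := by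
  decide +kernel

theorem MZ_det : MZ.det ≠ 0 := by
  intro h
  have h1 : (MZ * NZ).map (Int.castRingHom (ZMod 101)) = 1 := by
    ext i j
    have := MN_check i j
    have h2 : (∑ l, MZ i l * NZ l j) ≡ (if i = j then 1 else 0) [ZMOD 101] := by
      unfold Int.ModEq
      rw [this]
      split_ifs <;> rfl
    have h3 := (ZMod.intCast_eq_intCast_iff _ _ 101).mpr h2
    rw [Matrix.map_apply, Matrix.mul_apply, eq_intCast, h3, Matrix.one_apply]
    split_ifs <;> simp
  have h4 := congrArg Matrix.det h1
  rw [← RingHom.mapMatrix_apply, ← RingHom.map_det, Matrix.det_mul, h, zero_mul, map_zero,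
    Matrix.det_one] at h4
  exact absurd h4 (by decide)

/-- generic coefficients -/
def gen (k : Type*) [Field k] (i : ℕ) : MvPolynomial (Fin 9) k :=
  if h : i < 9 then X ⟨i, h⟩ else 0

theorem genOct_eq (k : Type*) [Field k] : genOct k = bform 8 (gen k) := by
  unfold genOct bform
  rw [Finset.sum_range]
  refine Finset.sum_congr rfl fun i _ => ?_
  simp [gen]

theorem const_bform {R : Type*} [CommRing R] (c : ℕ → R) :
    constantCoeff (bform 0 c) = c 0 := by
  simp [bform]

/-- normalising constant -/
def nc (k : Type*) [Field k] (n m r : ℕ) : k :=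
  (((m - r).factorial * (n - r).factorial : ℕ) : k) / ((n.factorial * m.factorial : ℕ) : k)

theorem nc_ne (k : Type*) [Field k] [CharZero k] (n m r : ℕ) : nc k n m r ≠ 0 := by
  unfold nc
  apply div_ne_zero <;> exact_mod_cast by positivity

theorem transv' (k : Type*) [Field k] (n m r : ℕ)
    (hn : r ≤ n) (hm : r ≤ m) (s t : k) (c d : ℕ → MvPolynomial (Fin 9) k) :
    transvectantA k (MvPolynomial (Fin 9) k) n m r (bform n fun i => C s * c i)
      (bform m fun i => C t * d i) =
      bform (n - r + (m - r)) (fun l => C (nc k n m r * s * t) * tv n m r c d l) := by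
  rw [transv k n m r hn hm, C_mul_bform]
  apply bform_congr
  intro l _
  rw [tv_scale]
  simp only [MvPolynomial.algebraMap_eq, map_mul, nc]
  ring

theorem genOct_eq' (k : Type*) [Field k] : genOct k = bform 8 (fun i => C 1 * gen k i) := by
  rw [genOct_eq]
  apply bform_congr
  simp

theorem J_eq (k : Type*) [Field k] [CharZero k] : ∃ s : Fin 6 → k, (∀ i, s i ≠ 0) ∧
    ∀ i, (![JP2 k, JP3 k, JP4 k, JP5 k, JP6 k, JP7 k] : Fin 6 → MvPolynomial (Fin 9) k) i =
      C (s i) * Ic (gen k) i := by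
  have hk : covkP k = bform 4 (fun l => C (nc k 8 8 6 * 1 * 1) * Kc (gen k) l) := by
    unfold covkP
    rw [genOct_eq', transv' k 8 8 6 (by norm_num) (by norm_num)]
    rfl
  have hg : covgP k = bform 8 (fun l => C (nc k 8 8 4 * 1 * 1) * Gc (gen k) l) := by
    unfold covgP
    rw [genOct_eq', transv' k 8 8 4 (by norm_num) (by norm_num)]
    rfl
  obtain ⟨a, ha, hk⟩ : ∃ a : k, a ≠ 0 ∧ covkP k = bform 4 (fun l => C a * Kc (gen k) l) :=
    ⟨_, by simpa using nc_ne k 8 8 6, hk⟩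
  obtain ⟨b, hb, hg⟩ : ∃ b : k, b ≠ 0 ∧ covgP k = bform 8 (fun l => C b * Gc (gen k) l) :=
    ⟨_, by simpa using nc_ne k 8 8 4, hg⟩
  have hh : covhP k = bform 4 (fun l => C (nc k 4 4 2 * a * a) * Hc (gen k) l) := by
    unfold covhP
    rw [hk, transv' k 4 4 2 (by norm_num) (by norm_num)]
    rfl
  have hm : covmP k = bform 4 (fun l => C (nc k 8 4 4 * 1 * a) * Mc (gen k) l) := by
    unfold covmP
    rw [hk, genOct_eq', transv' k 8 4 4 (by norm_num) (by norm_num)]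
    rfl
  obtain ⟨e, he, hh⟩ : ∃ e : k, e ≠ 0 ∧ covhP k = bform 4 (fun l => C e * Hc (gen k) l) :=
    ⟨_, by simpa [ha] using nc_ne k 4 4 2, hh⟩
  obtain ⟨w, hw, hm⟩ : ∃ w : k, w ≠ 0 ∧ covmP k = bform 4 (fun l => C w * Mc (gen k) l) :=
    ⟨_, by simpa [ha] using nc_ne k 8 4 4, hm⟩
  have n8 := nc_ne k 8 8 8
  have n4 := nc_ne k 4 4 4
  have cc : ∀ n m r (s t : k) (c d : ℕ → MvPolynomial (Fin 9) k), n = r → m = r →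
      constantCoeff (transvectantA k (MvPolynomial (Fin 9) k) n m r (bform n fun i => C s * c i)
      (bform m fun i => C t * d i)) = C (nc k n m r * s * t) * tv n m r c d 0 := by
    intro n m r s t c d h1 h2
    subst h1
    subst h2
    rw [transv' k _ _ _ le_rfl le_rfl]
    simp only [Nat.sub_self]
    rw [const_bform]
  refine ⟨![(2 ^ 2 * 5 * 7) * (nc k 8 8 8 * 1 * 1), ((2 ^ 4 * 5 ^ 2 * 7 ^ 3 : k) / 3) * (nc k 8 8 8 * 1 * b),
    (2 ^ 9 * 3 * 7 ^ 4) * (nc k 4 4 4 * a * a), (2 ^ 9 * 5 * 7 ^ 5) * (nc k 4 4 4 * w * a),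
    (2 ^ 14 * 3 ^ 2 * 7 ^ 6) * (nc k 4 4 4 * a * e), (2 ^ 14 * 3 * 5 * 7 ^ 7) * (nc k 4 4 4 * w * e)], ?_, ?_⟩
  · intro i
    fin_cases i <;> simp [ha, hb, he, hw, n8, n4]
  · have hC : ∀ n : ℕ, (C (n : k) : MvPolynomial (Fin 9) k) = n := fun n => by simp
    have c2 : (C (2 : k) : MvPolynomial (Fin 9) k) = 2 := by exact_mod_cast hC 2
    have c3 : (C (3 : k) : MvPolynomial (Fin 9) k) = 3 := by exact_mod_cast hC 3
    have c5 : (C (5 : k) : MvPolynomial (Fin 9) k) = 5 := by exact_mod_cast hC 5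
    have c7 : (C (7 : k) : MvPolynomial (Fin 9) k) = 7 := by exact_mod_cast hC 7
    intro i
    fin_cases i
    · change JP2 k = C ((2 ^ 2 * 5 * 7) * (nc k 8 8 8 * 1 * 1)) * tv 8 8 8 (gen k) (gen k) 0
      rw [JP2, genOct_eq', cc 8 8 8 _ _ _ _ rfl rfl]
      simp only [C_mul, C_pow, c2, c3, c5, c7]
      ring
    · change JP3 k = C (((2 ^ 4 * 5 ^ 2 * 7 ^ 3 : k) / 3) * (nc k 8 8 8 * 1 * b)) * tv 8 8 8 (gen k) (Gc (gen k)) 0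
      rw [JP3, hg, genOct_eq', cc 8 8 8 _ _ _ _ rfl rfl]
      simp only [C_mul, C_pow, c2, c3, c5, c7]
      ring
    · change JP4 k = C ((2 ^ 9 * 3 * 7 ^ 4) * (nc k 4 4 4 * a * a)) * tv 4 4 4 (Kc (gen k)) (Kc (gen k)) 0
      rw [JP4, hk, cc 4 4 4 _ _ _ _ rfl rfl]
      simp only [C_mul, C_pow, c2, c3, c5, c7]
      ring
    · change JP5 k = C ((2 ^ 9 * 5 * 7 ^ 5) * (nc k 4 4 4 * w * a)) * tv 4 4 4 (Mc (gen k)) (Kc (gen k)) 0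
      rw [JP5, hk, hm, cc 4 4 4 _ _ _ _ rfl rfl]
      simp only [C_mul, C_pow, c2, c3, c5, c7]
      ring
    · change JP6 k = C ((2 ^ 14 * 3 ^ 2 * 7 ^ 6) * (nc k 4 4 4 * a * e)) * tv 4 4 4 (Kc (gen k)) (Hc (gen k)) 0
      rw [JP6, hk, hh, cc 4 4 4 _ _ _ _ rfl rfl]
      simp only [C_mul, C_pow, c2, c3, c5, c7]
      ring
    · change JP7 k = C ((2 ^ 14 * 3 * 5 * 7 ^ 7) * (nc k 4 4 4 * w * e)) * tv 4 4 4 (Mc (gen k)) (Hc (gen k)) 0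
      rw [JP7, hm, hh, cc 4 4 4 _ _ _ _ rfl rfl]
      simp only [C_mul, C_pow, c2, c3, c5, c7]
      ring

theorem jac_ne (k : Type*) [Field k] [CharZero k] :
    (Matrix.of fun i j => pderiv (dirs j)
      ((![JP2 k, JP3 k, JP4 k, JP5 k, JP6 k, JP7 k] : Fin 6 → MvPolynomial (Fin 9) k) i)).det ≠ 0 := by
  obtain ⟨s, hs, hJ⟩ := J_eq k
  have h1 : (Matrix.of fun i j => pderiv (dirs j)
      ((![JP2 k, JP3 k, JP4 k, JP5 k, JP6 k, JP7 k] : Fin 6 → MvPolynomial (Fin 9) k) i)) =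
      Matrix.of fun i j => C (s i) *
        (Matrix.of (fun i j => pderiv (dirs j) (Ic (gen k) i)) : Matrix (Fin 6) (Fin 6) _) i j := by
    ext1 i j
    simp only [Matrix.of_apply]
    rw [hJ, pderiv_C_mul]
  rw [h1, Matrix.det_mul_column]
  apply mul_ne_zero
  · rw [Finset.prod_ne_zero_iff]
    intro i _
    simpa using hs i
  · intro h0
    have h2 := congrArg (eval (fun i : Fin 9 => ((pt i : ℤ) : k))) h0
    rw [RingHom.map_det, map_zero] at h2
    apply MZ_det
    have h3 : ((MZ.det : ℤ) : k) = 0 := by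
      rw [← h2, ← eq_intCast (Int.castRingHom k), RingHom.map_det]
      congr 1
      ext i j
      simp only [RingHom.mapMatrix_apply, Matrix.map_apply, Matrix.of_apply, MZ]
      rw [Ic_deriv, dIc_map, dIc_map]
      congr 1
      · funext l
        by_cases hl : l < 9
        · simp [gen, hl]
        · have : pt l = 0 := by
            unfold pt
            rw [if_neg (by omega)]
          simp [gen, hl, this]
      · funext l
        by_cases hl : l < 9
        · simp only [gen, hl, dif_pos, pderiv_X, Pi.single_apply, Fin.ext_iff]
          split_ifs <;> simp
        · have : l ≠ (dirs j : ℕ) := by have := (dirs j).2; omega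
          simp [gen, hl, this]
    exact_mod_cast h3

end helpers

/-- The invariants `J_2, ..., J_7`, viewed as polynomials in the coefficients
`a_0, ..., a_8` of the generic binary octavic, are algebraically independent over `k`. -/
theorem J_algebraically_independent (k : Type*) [Field k] [IsAlgClosed k] [CharZero k]
    (P : MvPolynomial (Fin 6) k)
    (hP : aeval ![JP2 k, JP3 k, JP4 k, JP5 k, JP6 k, JP7 k] P = 0) :
    P = 0 := by
  exact jac_crit _ (fun j => pderiv (dirs j)) (jac_ne k) _ P le_rfl hP
end
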